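/- Let α, β be reals with 2 < α ≤ 5/2 and 4α − β = 6, and let G be a minimal counterexample for the class 𝔉 of forests and parameters α, β. Then no two vertices of degree 4 in G lie in a common 4-vertex clique of G (i.e., there is no set of four vertices inducing K4 that contains two vertices of degree 4). -/

import Mathlib

open SimpleGraph

/-- `M` is a vertex cut of `G`: the complement of `M` can be partitioned into two nonempty
sets `L`, `R` with no edge of `G` joining a vertex of `L` to a vertex of `R`. -/
def IsVertexCut {V : Type*} (G : SimpleGraph V) (M : Set V) : Prop :=
  ∃ L R : Set V, L.Nonempty ∧ R.Nonempty ∧ Disjoint L R ∧ L ∪ R = Mᶜ ∧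
    ∀ x ∈ L, ∀ y ∈ R, ¬ G.Adj x y

/-- `(M, L, R)` is a separation of `G`. -/
def IsSeparation {V : Type*} (G : SimpleGraph V) (M L R : Set V) : Prop :=
  L.Nonempty ∧ R.Nonempty ∧ M ∪ L ∪ R = Set.univ ∧
  Disjoint M L ∧ Disjoint M R ∧ Disjoint L R ∧
  ∀ x ∈ L, ∀ y ∈ R, ¬ G.Adj x y

/-- The quality function `q_{α,β}(G) = α|V(G)| − |E(G)| − β`. -/
noncomputable def quality {V : Type*} (α β : ℝ) (G : SimpleGraph V) : ℝ :=
  α * Nat.card V - Nat.card G.edgeSet - β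

/-- degree of a vertex as the cardinality of its neighbor set. -/
noncomputable def vdeg {V : Type*} (G : SimpleGraph V) (v : V) : ℕ :=
  (G.neighborSet v).ncard

/-- The class of forests. -/
def ForestClass : ∀ (W : Type), SimpleGraph W → Prop := fun _ H => H.IsAcyclic

/-- The class of bipartite graphs. -/
def BipartiteClass : ∀ (W : Type), SimpleGraph W → Prop := fun _ H => H.Colorable 2

/-- `G` has a `Ψ`-cut: a vertex cut whose induced subgraph lies in `Ψ`. -/
def HasPsiCut (Ψ : ∀ (W : Type), SimpleGraph W → Prop) {V : Type} (G : SimpleGraph V) : Prop :=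
  ∃ M : Set V, IsVertexCut G M ∧ Ψ ↥M (G.induce M)

/-- `G` has a forest cut. -/
def HasForestCut {V : Type*} (G : SimpleGraph V) : Prop :=
  ∃ M : Set V, IsVertexCut G M ∧ (G.induce M).IsAcyclic

/-- `G` has a bipartite cut. -/
def HasBipartiteCut {V : Type*} (G : SimpleGraph V) : Prop :=
  ∃ M : Set V, IsVertexCut G M ∧ (G.induce M).Colorable 2

/-- `G` has an independent cut. -/
def HasIndependentCut {V : Type*} (G : SimpleGraph V) : Prop :=
  ∃ M : Set V, IsVertexCut G M ∧ ∀ x ∈ M, ∀ y ∈ M, ¬ G.Adj x y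

/-- `G` is a minimal counterexample for the class `Ψ` and parameters `α`, `β`. -/
def MinCounterexample (Ψ : ∀ (W : Type), SimpleGraph W → Prop) (α β : ℝ)
    {V : Type} (G : SimpleGraph V) : Prop :=
  4 ≤ Nat.card V ∧ 0 < quality α β G ∧ ¬ HasPsiCut Ψ G ∧
  ∀ (W : Type) (H : SimpleGraph W),
    4 ≤ Nat.card W → Nat.card W < Nat.card V → 0 < quality α β H → HasPsiCut Ψ H

/-- `T0`: a triangle together with an isolated vertex. -/
def graphT0 : SimpleGraph (Fin 4) := SimpleGraph.fromEdgeSet {s(0,1), s(0,2), s(1,2)}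

/-- `T1`: a triangle with an extra vertex joined to exactly one triangle vertex. -/
def graphT1 : SimpleGraph (Fin 4) := SimpleGraph.fromEdgeSet {s(0,1), s(0,2), s(1,2), s(2,3)}

/-- The diamond graph `K4` minus one edge. -/
def diamondGraph : SimpleGraph (Fin 4) := (⊤ : SimpleGraph (Fin 4)).deleteEdges {s(0,1)}

/-- Number of edges of `G` with one endpoint in `X` and the other outside `X`. -/
noncomputable def crossEdges {V : Type*} (G : SimpleGraph V) (X : Set V) : ℕ :=
  {e : Sym2 V | e ∈ G.edgeSet ∧ ∃ x ∈ X, ∃ y ∉ X, e = s(x,y)}.ncard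

/-!
Let `{u, v, a, b}` be a clique with `u` and `v` of degree 4, let `c` be the further neighbour of
`u` and `d` that of `v`. Deleting `u` and `v` loses 2 vertices and 7 edges, so, as `2α ≤ 5`, it
increases the quality by at least 2: up to two new edges may be added to `G - u - v`, and the
resulting graph `G'` still has positive quality. If `|V(G)| ≥ 6`, then `G'` has a forest cut by
minimality (`reduce`). If this cut does not separate any two of `a, b, c, d`, then `u` and `v` can
be put on one side, giving a forest cut of `G`. Hence at least three pairs among `a, b, c, d` are
non-adjacent (`Config.not_covered`).

If `c = d`, this is absurd when `|V(G)| ≥ 6`; for `|V(G)| = 5`, a count of edges shows that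
`{u, v}` is a cut (`Config.false_of_eq`). Let `c ≠ d`. If `a b c` is a triangle, then `d` is
adjacent to none of `a, b, c`. A forest cut of `G'` for the new edges `d a`, `d c` has to contain
`a` and `c` and to separate `b` from `d`; adding `v` to it as a leaf attached to `a`, and `u` to
the side of `b`, gives a forest cut of `G` (`Config.not_triangle`). By symmetry `a b d` is no
triangle either. Now `a, b, c, d` carry at most two edges besides `a b`, so they induce a forest,
which is a cut separating `u` and `v` from the rest unless these six vertices are all of `G`; in
that case `d` misses `a` or `b`, and its neighbourhood lies in the forest induced by `v`, `c` and
the other of these two (`Config.not_small`).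
-/

/-! ### Forests and cuts -/

/-- Adding a vertex with at most one neighbour to a forest gives a forest. -/
lemma acyclic_insert {V : Type*} {G : SimpleGraph V} {M : Set V} {v : V}
    (hM : (G.induce M).IsAcyclic)
    (hv : ∀ x ∈ M, ∀ y ∈ M, G.Adj v x → G.Adj v y → x = y) :
    (G.induce (insert v M)).IsAcyclic := by
  classical
  intro x c hc
  by_cases hx : (⟨v, Set.mem_insert v M⟩ : ↥(insert v M)) ∈ c.support
  · -- A cycle through `v` leaves `v` along two different edges.
    have hc' := hc.rotate hx
    have hnil := hc'.not_nil
    have h1 := Walk.adj_snd hnil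
    have h2 := (Walk.adj_penultimate hnil).symm
    have hne := hc'.snd_ne_penultimate
    have hmem : ∀ z : ↥(insert v M), G.Adj v z → (z : V) ∈ M := fun z hz =>
      z.2.resolve_left fun h => G.ne_of_adj hz h.symm
    exact hne (Subtype.ext (hv _ (hmem _ h1) _ (hmem _ h2) h1 h2))
  · have hs : ∀ y ∈ c.support, y ∈ {y : ↥(insert v M) | (y : V) ∈ M} := by
      intro y hy
      refine y.2.resolve_left fun h => hx ?_
      convert hy
      exact h.symm
    have hac : ((G.induce (insert v M)).induce {y : ↥(insert v M) | (y : V) ∈ M}).IsAcyclic := by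
      refine IsAcyclic.comap (G' := G.induce M) ⟨fun y => ⟨y.1.1, y.2⟩, fun {a b} h => h⟩ ?_ hM
      intro a b h
      have h' : (a.1.1 : V) = b.1.1 := congrArg (fun z : M => (z : V)) h
      exact Subtype.ext (Subtype.ext h')
    have hmap := Walk.map_induce c hs
    rw [← hmap] at hc
    exact hac _ ((Walk.isCycle_map_iff_of_injective (Embedding.induce (G := G.induce (insert v M))
      {y : ↥(insert v M) | (y : V) ∈ M}).injective).1 hc)

lemma acyclic_pair {V : Type*} (G : SimpleGraph V) (x y : V) :
    (G.induce ({x, y} : Set V)).IsAcyclic := by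
  refine acyclic_insert IsAcyclic.of_subsingleton ?_
  rintro _ rfl _ rfl _ _
  rfl

/-! ### Deleting two vertices of degree four -/

/-- At least seven edges of `G` meet `{u, v}`, so a set `F` of edges avoiding `u` and `v`, taken
from `G` and a set `T` of new edges, has at most `|E(G)| - 7 + |T|` elements. -/
lemma edge_count {V : Type*} [Finite V] (G : SimpleGraph V) {u v : V}
    (huv : u ≠ v) (hu : vdeg G u = 4) (hv : vdeg G v = 4) (F T : Set (Sym2 V))
    (hF : F ⊆ G.edgeSet ∪ T) (hF' : ∀ e ∈ F, u ∉ e ∧ v ∉ e) :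
    F.ncard + 7 ≤ G.edgeSet.ncard + T.ncard := by
  set I : V → Set (Sym2 V) := fun w => (fun x => s(w, x)) '' G.neighborSet w with hI
  have hcard : ∀ w, (I w).ncard = vdeg G w := fun w =>
    Set.ncard_image_of_injective _ fun x y h => Sym2.congr_right.mp h
  have hsub : ∀ w, I w ⊆ G.edgeSet := by
    rintro w _ ⟨x, hx, rfl⟩
    exact hx
  have hint : I u ∩ I v ⊆ {s(u, v)} := by
    rintro _ ⟨⟨x, hx, rfl⟩, ⟨y, hy, h⟩⟩
    simp only [Sym2.eq_iff, Set.mem_singleton_iff] at h ⊢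
    grind
  have h1 := Set.ncard_le_ncard hint
  rw [Set.ncard_singleton] at h1
  have h2 := Set.ncard_union_add_ncard_inter (I u) (I v)
  have hdis : Disjoint (F \ T) (I u ∪ I v) := by
    rw [Set.disjoint_left]
    rintro e ⟨he, -⟩ (⟨x, -, rfl⟩ | ⟨x, -, rfl⟩)
    · exact (hF' _ he).1 (by simp)
    · exact (hF' _ he).2 (by simp)
  have h3 := Set.ncard_union_eq hdis
  have h4 : (F \ T) ∪ (I u ∪ I v) ⊆ G.edgeSet :=
    Set.union_subset (fun e he => (hF he.1).resolve_right he.2)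
      (Set.union_subset (hsub u) (hsub v))
  have h5 := Set.ncard_le_ncard h4
  have h6 := Set.ncard_le_ncard_sdiff_add_ncard F T
  rw [hcard, hcard] at h2
  omega

lemma quality_bound {V : Type*} [Finite V] {α β : ℝ} {G : SimpleGraph V}
    (hq : 0 < quality α β G) :
    (G.edgeSet.ncard : ℝ) < α * Nat.card V - β := by
  unfold quality at hq
  have : (Nat.card G.edgeSet : ℝ) = G.edgeSet.ncard := rfl
  linarith

/-- Minimality of `G` applied to `G - u - v` with the new edges `T`: the forest cut `M` obtained and
its two sides `L` and `R` are given as sets of vertices of `G` that partition `V \ {u, v}`. -/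
lemma reduce {α β : ℝ} (hα2 : α ≤ 5 / 2)
    {V : Type} [Finite V] {G : SimpleGraph V} (hG : MinCounterexample ForestClass α β G)
    {u v : V} (huv : u ≠ v) (hu : vdeg G u = 4) (hv : vdeg G v = 4)
    (hcard : 6 ≤ Nat.card V) (T : Set (Sym2 V)) (hT : T.ncard ≤ 2) :
    ∃ M L R : Set V, L.Nonempty ∧ R.Nonempty ∧ Disjoint L R ∧ Disjoint L M ∧ Disjoint R M ∧
      (∀ x, x ∈ M ∨ x ∈ L ∨ x ∈ R ↔ x ≠ u ∧ x ≠ v) ∧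
      (∀ x ∈ L, ∀ y ∈ R, ¬ G.Adj x y ∧ s(x, y) ∉ T) ∧ (G.induce M).IsAcyclic := by
  obtain ⟨-, hq, -, hmin⟩ := hG
  let W := {x : V // x ≠ u ∧ x ≠ v}
  let H : SimpleGraph W := (G ⊔ fromEdgeSet T).comap Subtype.val
  have hW : Nat.card W + 2 = Nat.card V := by
    have h1 : Nat.card W = ({u, v}ᶜ : Set V).ncard := by
      rw [← Nat.card_coe_set_eq]
      exact Nat.card_congr (Equiv.subtypeEquivRight fun x => by simp)
    have h2 := Set.ncard_add_ncard_compl ({u, v} : Set V)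
    rw [Set.ncard_pair huv] at h2
    omega
  have hE : Nat.card H.edgeSet + 7 ≤ G.edgeSet.ncard + T.ncard := by
    have h1 : Nat.card H.edgeSet = (Sym2.map Subtype.val '' H.edgeSet).ncard := by
      rw [Set.ncard_image_of_injective _ (Sym2.map.injective Subtype.val_injective)]
      rfl
    rw [h1]
    refine edge_count G huv hu hv _ T ?_ ?_
    · rintro _ ⟨e, he, rfl⟩
      induction e with
      | _ x y =>
        have he' : G.Adj x y ∨ (s((x : V), (y : V)) ∈ T ∧ (x : V) ≠ y) := by
          simpa [H] using he
        exact he'.imp id And.left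
    · rintro _ ⟨e, he, rfl⟩
      induction e with
      | _ x y =>
        have := x.2
        have := y.2
        simp only [Sym2.map_mk, Sym2.mem_iff]
        grind
  have hqH : 0 < quality α β H := by
    have h1 := quality_bound hq
    unfold quality
    have h2 : ((Nat.card W : ℕ) : ℝ) + 2 = Nat.card V := by exact_mod_cast hW
    have h3 : ((Nat.card H.edgeSet : ℕ) : ℝ) + 5 ≤ G.edgeSet.ncard := by
      exact_mod_cast (by omega : Nat.card H.edgeSet + 5 ≤ G.edgeSet.ncard)
    rw [← h2] at h1
    linarith
  obtain ⟨M, ⟨L, R, hL, hR, hLR, hU, hadj⟩, hM⟩ := hmin W H (by omega) (by omega) hqH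
  have hmem : ∀ x : W, x ∈ L ∨ x ∈ R ↔ x ∉ M := fun x => by
    rw [← Set.mem_compl_iff, ← hU, Set.mem_union]
  have hinj : Function.Injective (Subtype.val : W → V) := Subtype.val_injective
  refine ⟨Subtype.val '' M, Subtype.val '' L, Subtype.val '' R, hL.image _, hR.image _,
    (Set.disjoint_image_iff hinj).2 hLR, (Set.disjoint_image_iff hinj).2 ?_,
    (Set.disjoint_image_iff hinj).2 ?_, ?_, ?_, ?_⟩
  · exact Set.disjoint_left.2 fun x hx => (hmem x).1 (Or.inl hx)
  · exact Set.disjoint_left.2 fun x hx => (hmem x).1 (Or.inr hx)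
  · intro x
    constructor
    · rintro (⟨y, -, rfl⟩ | ⟨y, -, rfl⟩ | ⟨y, -, rfl⟩) <;> exact y.2
    · intro hx
      have := hmem ⟨x, hx⟩
      by_cases h : (⟨x, hx⟩ : W) ∈ M
      · exact Or.inl ⟨_, h, rfl⟩
      · exact Or.inr ((this.2 h).imp (fun h => ⟨_, h, rfl⟩) fun h => ⟨_, h, rfl⟩)
  · rintro _ ⟨x, hx, rfl⟩ _ ⟨y, hy, rfl⟩
    have h := hadj x hx y hy
    have hne : (x : V) ≠ y := fun h =>
      Set.disjoint_left.1 hLR hx (hinj h ▸ hy)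
    have h' : ¬ (G.Adj x y ∨ (s((x : V), (y : V)) ∈ T ∧ (x : V) ≠ y)) := by
      simpa [H] using h
    exact ⟨fun h1 => h' (Or.inl h1), fun h1 => h' (Or.inr ⟨h1, hne⟩)⟩
  · have hM' : (H.induce M).IsAcyclic := hM
    have hx : ∀ x : ↥(Subtype.val '' M : Set V), ∃ h : (x : V) ≠ u ∧ (x : V) ≠ v,
        (⟨x, h⟩ : W) ∈ M := by
      rintro ⟨_, y, hy, rfl⟩
      exact ⟨y.2, hy⟩
    refine hM'.comap ⟨fun x => ⟨⟨x, (hx x).1⟩, (hx x).2⟩, fun {a b} h => Or.inl h⟩ ?_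
    intro a b h
    have h' : (a : V) = b := congrArg (fun z : M => z.1.1) h
    exact Subtype.ext h'

/-- A minimal counterexample has no forest cut `M`; here one side of the cut is `L`, and the other
consists of all remaining vertices. -/
lemma not_cut {α β : ℝ} {V : Type} {G : SimpleGraph V}
    (hG : MinCounterexample ForestClass α β G) {M L : Set V} (hM : (G.induce M).IsAcyclic)
    (hLM : ∀ x ∈ L, x ∉ M) (hL : ∃ x, x ∈ L) (hR : ∃ y, y ∉ M ∧ y ∉ L)
    (hadj : ∀ x ∈ L, ∀ y, y ∉ M → y ∉ L → ¬ G.Adj x y) : False := by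
  refine hG.2.2.1 ⟨M, ⟨L, {y | y ∉ M ∧ y ∉ L}, hL, hR, ?_, ?_,
    fun x hx y hy => hadj x hx y hy.1 hy.2⟩, hM⟩
  · exact Set.disjoint_left.2 fun x hx hy => hy.2 hx
  · ext x
    have := hLM x
    simp only [Set.mem_union, Set.mem_ofPred_eq, Set.mem_compl_iff]
    tauto

/-! ### Two vertices of degree four in a clique -/

/-- The vertices `u, v, a, b` form a clique, `u` and `v` have degree 4, the further neighbour of `u`
is `c`, and that of `v` is `d`. The case `c = d` is allowed; the other coincidences are excluded by
the fields, as graphs have no loops. -/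
structure Config {V : Type*} (G : SimpleGraph V) (u v a b c d : V) : Prop where
  nbr_u : ∀ x, G.Adj u x ↔ x = v ∨ x = a ∨ x = b ∨ x = c
  nbr_v : ∀ x, G.Adj v x ↔ x = u ∨ x = a ∨ x = b ∨ x = d
  adj_ab : G.Adj a b
  c_ne : c ≠ v ∧ c ≠ a ∧ c ≠ b
  d_ne : d ≠ u ∧ d ≠ a ∧ d ≠ b
  deg_u : vdeg G u = 4
  deg_v : vdeg G v = 4

namespace Config

variable {V : Type} {G : SimpleGraph V} {u v a b c d : V}

lemma symm (h : Config G u v a b c d) : Config G v u a b d c :=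
  ⟨h.nbr_v, h.nbr_u, h.adj_ab, h.d_ne, h.c_ne, h.deg_v, h.deg_u⟩

lemma swap (h : Config G u v a b c d) : Config G u v b a c d :=
  ⟨fun x => by rw [h.nbr_u]; tauto, fun x => by rw [h.nbr_v]; tauto, h.adj_ab.symm,
    by have := h.c_ne; tauto, by have := h.d_ne; tauto, h.deg_u, h.deg_v⟩

lemma ne (h : Config G u v a b c d) : u ≠ v ∧ u ≠ a ∧ u ≠ b ∧ u ≠ c ∧ v ≠ a ∧ v ≠ b ∧ v ≠ d ∧
    a ≠ b := by
  have h1 := fun x => (G.ne_of_adj (a := u) (b := x))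
  have h2 := fun x => (G.ne_of_adj (a := v) (b := x))
  simp only [h.nbr_u] at h1
  simp only [h.nbr_v] at h2
  exact ⟨h1 _ (by simp), h1 _ (by simp), h1 _ (by simp), h1 _ (by simp), h2 _ (by simp),
    h2 _ (by simp), h2 _ (by simp), G.ne_of_adj h.adj_ab⟩

variable {α β : ℝ}

/-- For any two pairs `e` and `f`, the graph `G - u - v` with the new edges `e` and `f` has a forest
cut `M` both of whose sides, `L` and the set of all remaining vertices, meet `{a, b, c, d}`:
if one side missed `{a, b, c, d}`, adding `u` and `v` to the opposite side would give a forest cut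
of `G`. -/
lemma exists_missing [Finite V] (hα2 : α ≤ 5 / 2) (hG : MinCounterexample ForestClass α β G)
    (h : Config G u v a b c d) (hcard : 6 ≤ Nat.card V) (e f : Sym2 V) :
    ∃ M L : Set V, (G.induce M).IsAcyclic ∧ (u ∉ M ∧ v ∉ M ∧ u ∉ L ∧ v ∉ L) ∧
      (∀ x ∈ L, x ∉ M) ∧
      (∀ x y, x ≠ u → x ≠ v → y ≠ u → y ≠ v → x ∉ M → y ∉ M →
        (G.Adj x y ∨ s(x, y) = e ∨ s(x, y) = f) → (x ∈ L ↔ y ∈ L)) ∧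
      (∃ x, (x = a ∨ x = b ∨ x = c ∨ x = d) ∧ x ∈ L) ∧
      (∃ x, (x = a ∨ x = b ∨ x = c ∨ x = d) ∧ x ∉ M ∧ x ∉ L) := by
  obtain ⟨M, L, R, ⟨l, hl⟩, ⟨r, hr⟩, hLR, hLM, hRM, hmem, hadj, hM⟩ :=
    reduce hα2 hG h.ne.1 h.deg_u h.deg_v hcard {e, f} (Set.ncard_insert_le e {f} |>.trans (by simp))
  rw [Set.disjoint_left] at hLR hLM hRM
  have hadj' : ∀ x ∈ L, ∀ y ∈ R, ¬ (G.Adj x y ∨ s(x, y) = e ∨ s(x, y) = f) := fun x hx y hy => by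
    simpa using hadj x hx y hy
  have huv : u ∉ M ∧ v ∉ M ∧ u ∉ L ∧ v ∉ L := by
    have h1 := hmem u
    have h2 := hmem v
    tauto
  have hR : ∀ x, x ≠ u → x ≠ v → x ∉ M → x ∉ L → x ∈ R := fun x h1 h2 h3 h4 => by
    have := hmem x
    tauto
  have hlink : ∀ x y, x ≠ u → x ≠ v → y ≠ u → y ≠ v → x ∉ M → y ∉ M →
      (G.Adj x y ∨ s(x, y) = e ∨ s(x, y) = f) → x ∈ L → y ∈ L := by
    intro x y _ _ hyu hyv _ hyM hxy hx
    by_contra hy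
    exact hadj' x hx y (hR y hyu hyv hyM hy) hxy
  have hr' : r ∉ M ∧ r ∉ L ∧ r ≠ u ∧ r ≠ v :=
    ⟨hRM hr, fun h => hLR h hr, (hmem r).1 (Or.inr (Or.inr hr))⟩
  refine ⟨M, L, hM, huv, @hLM, fun x y h1 h2 h3 h4 h5 h6 hxy =>
    ⟨hlink x y h1 h2 h3 h4 h5 h6 hxy, hlink y x h3 h4 h1 h2 h6 h5 ?_⟩, ?_, ?_⟩
  · rwa [G.adj_comm, Sym2.eq_swap]
  · by_contra! hcon
    refine not_cut hG hM @hLM ⟨l, hl⟩ ⟨u, huv.1, huv.2.2.1⟩ ?_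
    intro x hx y hyM hyL hxy
    by_cases hyu : y = u
    · subst hyu
      have h1 := (h.nbr_u x).1 hxy.symm
      rcases h1 with rfl | h1
      · exact huv.2.2.2 hx
      · exact hcon x (by tauto) hx
    by_cases hyv : y = v
    · subst hyv
      have h1 := (h.nbr_v x).1 hxy.symm
      rcases h1 with rfl | h1
      · exact huv.2.2.1 hx
      · exact hcon x (by tauto) hx
    exact hadj' x hx y (hR y hyu hyv hyM hyL) (Or.inl hxy)
  · by_contra! hcon
    refine not_cut hG (L := L ∪ {u, v}) hM ?_ ⟨u, by simp⟩ ⟨r, hr'.1, by simp [hr'.2]⟩ ?_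
    · rintro x (hx | rfl | rfl)
      exacts [hLM hx, huv.1, huv.2.1]
    · intro x hx y hyM hyL hxy
      simp only [Set.mem_union, Set.mem_insert_iff, Set.mem_singleton_iff, not_or] at hyL
      obtain ⟨hyL, hyu, hyv⟩ := hyL
      rcases hx with hx | rfl | rfl
      · exact hadj' x hx y (hR y hyu hyv hyM hyL) (Or.inl hxy)
      · have h1 := (h.nbr_u y).1 hxy
        exact hyL (hcon y (by tauto) hyM)
      · have h1 := (h.nbr_v y).1 hxy
        exact hyL (hcon y (by tauto) hyM)

/-- Two new edges cannot turn `{a, b, c, d}` into a clique, since a clique is not separated by any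
cut. -/
lemma not_covered [Finite V] (hα2 : α ≤ 5 / 2) (hG : MinCounterexample ForestClass α β G)
    (h : Config G u v a b c d) (hcard : 6 ≤ Nat.card V) (e f : Sym2 V)
    (hac : G.Adj a c ∨ s(a, c) = e ∨ s(a, c) = f) (hbc : G.Adj b c ∨ s(b, c) = e ∨ s(b, c) = f)
    (had : G.Adj a d ∨ s(a, d) = e ∨ s(a, d) = f) (hbd : G.Adj b d ∨ s(b, d) = e ∨ s(b, d) = f)
    (hcd : c = d ∨ G.Adj c d ∨ s(c, d) = e ∨ s(c, d) = f) : False := by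
  obtain ⟨M, L, -, -, hLM, hlink, ⟨x, hx, hxL⟩, ⟨y, hy, hyM, hyL⟩⟩ :=
    h.exists_missing hα2 hG hcard e f
  obtain ⟨hcv, -, -⟩ := h.c_ne
  obtain ⟨hdu, -, -⟩ := h.d_ne
  obtain ⟨-, h2, h3, h4, h5, h6, h7, -⟩ := h.ne
  have kab := hlink a b h2.symm h5.symm h3.symm h6.symm
  have kac := hlink a c h2.symm h5.symm h4.symm hcv
  have kbc := hlink b c h3.symm h6.symm h4.symm hcv
  have kad := hlink a d h2.symm h5.symm hdu h7.symm
  have kbd := hlink b d h3.symm h6.symm hdu h7.symm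
  have kcd := hlink c d h4.symm hcv hdu h7.symm
  have hab := h.adj_ab
  have hxM := hLM x hxL
  rcases hx with rfl | rfl | rfl | rfl <;> rcases hy with rfl | rfl | rfl | rfl <;> grind only

lemma false_of_eq [Finite V] (hα2 : α ≤ 5 / 2) (hβ : 4 * α - β = 6)
    (hG : MinCounterexample ForestClass α β G)
    (h : Config G u v a b c c) : False := by
  by_cases hcard : 6 ≤ Nat.card V
  · exact h.not_covered hα2 hG hcard s(a, c) s(b, c) (by simp) (by simp) (by simp) (by simp)
      (by simp)
  obtain ⟨h1, h2, h3, h4, h5, h6, h7, h8⟩ := h.ne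
  obtain ⟨-, hca, hcb⟩ := h.c_ne
  have h5card : ({u, v, a, b, c} : Set V).ncard = 5 := by
    rw [Set.ncard_insert_of_notMem, Set.ncard_insert_of_notMem, Set.ncard_insert_of_notMem,
      Set.ncard_pair] <;> grind
  have huniv : ({u, v, a, b, c} : Set V) = Set.univ := by
    refine Set.eq_of_subset_of_ncard_le (Set.subset_univ _) ?_
    rw [Set.ncard_univ]
    omega
  have hcardV : Nat.card V = 5 := by
    rw [← Set.ncard_univ, ← huniv, h5card]
  have hall : ∀ x, x = u ∨ x = v ∨ x = a ∨ x = b ∨ x = c := fun x => by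
    have : x ∈ ({u, v, a, b, c} : Set V) := huniv ▸ Set.mem_univ x
    simpa using this
  -- Since `α + 6 < 9`, a graph on five vertices with positive quality has at most eight edges.
  have hedge : ∀ z, (z = a ∨ z = b) → ¬ G.Adj c z := by
    intro z hz hcz
    have hF := edge_count G h1 h.deg_u h.deg_v {s(a, b), s(c, z)} ∅ (by
      rintro _ (rfl | rfl)
      · exact Or.inl h.adj_ab
      · exact Or.inl hcz) (by
      rintro _ (rfl | rfl) <;> simp only [Sym2.mem_iff] <;> grind)
    rw [Set.ncard_pair (by simp only [ne_eq, Sym2.eq_iff]; grind), Set.ncard_empty] at hF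
    have hq := quality_bound hG.2.1
    rw [hcardV] at hq
    have : (9 : ℝ) ≤ G.edgeSet.ncard := by exact_mod_cast hF
    push_cast at hq
    linarith
  refine not_cut hG (L := {a, b}) (acyclic_pair G u v) ?_ ⟨a, by simp⟩ ⟨c, ?_, ?_⟩ ?_
  · rintro x (rfl | rfl) <;> simp [h2.symm, h3.symm, h5.symm, h6.symm]
  · simp [h4.symm, h7.symm]
  · simp [hca, hcb]
  · intro x hx y hyM hyL hxy
    simp only [Set.mem_insert_iff, Set.mem_singleton_iff, not_or] at hyM hyL
    have := hall y
    obtain rfl : y = c := by tauto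
    exact hedge x hx hxy.symm

lemma six_le [Finite V] (h : Config G u v a b c d) (hcd : c ≠ d) : 6 ≤ Nat.card V := by
  obtain ⟨h1, h2, h3, h4, h5, h6, h7, h8⟩ := h.ne
  obtain ⟨hcv, hca, hcb⟩ := h.c_ne
  obtain ⟨hdu, hda, hdb⟩ := h.d_ne
  have h6card : ({u, v, a, b, c, d} : Set V).ncard = 6 := by
    rw [Set.ncard_insert_of_notMem, Set.ncard_insert_of_notMem, Set.ncard_insert_of_notMem,
      Set.ncard_insert_of_notMem, Set.ncard_pair] <;> grind
  have := Set.ncard_le_ncard (Set.subset_univ ({u, v, a, b, c, d} : Set V))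
  rwa [h6card, Set.ncard_univ] at this

/-- The vertices `a, b, c` do not form a triangle. Otherwise, for the new edges `a d` and `c d`, the
only separated pair is `b, d`, so `a` and `c` are in the cut, and `v` can join the cut as a leaf
attached to `a`, with `u` on the side of `b`. -/
lemma not_triangle [Finite V] (hα2 : α ≤ 5 / 2) (hG : MinCounterexample ForestClass α β G)
    (h : Config G u v a b c d) (hcd : c ≠ d) (hac : G.Adj a c) (hbc : G.Adj b c) : False := by
  have hcard := h.six_le hcd
  have hab := h.adj_ab
  obtain ⟨hcv, hca, hcb⟩ := h.c_ne
  obtain ⟨hdu, hda, hdb⟩ := h.d_ne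
  obtain ⟨h1, h2, h3, h4, h5, h6, h7, h8⟩ := h.ne
  have hda' : ¬ G.Adj a d := fun had => h.not_covered hα2 hG hcard s(b, d) s(c, d)
    (by simp [hac]) (by simp [hbc]) (by simp [had]) (by simp) (by simp)
  have hdb' : ¬ G.Adj b d := fun hbd => h.not_covered hα2 hG hcard s(a, d) s(c, d)
    (by simp [hac]) (by simp [hbc]) (by simp) (by simp [hbd]) (by simp)
  have hdc' : ¬ G.Adj c d := fun hcd => h.not_covered hα2 hG hcard s(a, d) s(b, d)
    (by simp [hac]) (by simp [hbc]) (by simp) (by simp) (by simp [hcd])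
  obtain ⟨M, L, hM, ⟨huM, hvM, huL, hvL⟩, hLM, hlink, ⟨x, hx, hxL⟩, ⟨y, hy, hyM, hyL⟩⟩ :=
    h.exists_missing hα2 hG hcard s(a, d) s(c, d)
  have hcase : a ∈ M ∧ c ∈ M ∧ b ∉ M ∧ d ∉ M ∧ (b ∈ L ↔ d ∉ L) := by
    have kab := hlink a b h2.symm h5.symm h3.symm h6.symm
    have kac := hlink a c h2.symm h5.symm h4.symm hcv
    have kbc := hlink b c h3.symm h6.symm h4.symm hcv
    have kad := hlink a d h2.symm h5.symm hdu h7.symm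
    have kcd := hlink c d h4.symm hcv hdu h7.symm
    have hxM := hLM x hxL
    clear hlink hLM
    rcases hx with rfl | rfl | rfl | rfl <;> rcases hy with rfl | rfl | rfl | rfl <;> grind only
  obtain ⟨haM, hcM, hbM, hdM, hbd⟩ := hcase
  have hMv : (G.induce (insert v M)).IsAcyclic := by
    refine acyclic_insert hM ?_
    have : ∀ x ∈ M, G.Adj v x → x = a := by
      intro z hz hvz
      rcases (h.nbr_v z).1 hvz with rfl | rfl | rfl | rfl
      · exact absurd hz huM
      · rfl
      · exact absurd hz hbM
      · exact absurd hz hdM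
    intro x hx y hy hvx hvy
    rw [this x hx hvx, this y hy hvy]
  have hmv : ∀ x, x ∉ insert v M ↔ x ≠ v ∧ x ∉ M := by simp
  -- outside `M ∪ {v}` the only neighbour of `u` is `b`
  have hub : ∀ x, x ≠ v → x ∉ M → G.Adj u x → x = b := by
    intro x hxv hxM hux
    rcases (h.nbr_u x).1 hux with rfl | rfl | rfl | rfl
    · exact absurd rfl hxv
    · exact absurd haM hxM
    · rfl
    · exact absurd hcM hxM
  by_cases hbL : b ∈ L
  · refine not_cut hG (L := insert u L) hMv ?_ ⟨u, by simp⟩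
      ⟨d, by simp [hdM, h7.symm], by simp [hdu, hbd.1 hbL]⟩ ?_
    · rintro x (rfl | hx)
      · simp [h1, huM]
      · rw [hmv]
        exact ⟨fun hxv => hvL (hxv ▸ hx), hLM x hx⟩
    · intro x hx y hyM hyL hxy
      rw [hmv] at hyM
      simp only [Set.mem_insert_iff, not_or] at hyL
      rcases hx with rfl | hx
      · exact hyL.2 (hub y hyM.1 hyM.2 hxy ▸ hbL)
      · have hxu : x ≠ u := fun h => huL (h ▸ hx)
        have hxv : x ≠ v := fun h => hvL (h ▸ hx)
        exact hyL.2 ((hlink x y hxu hxv hyL.1 hyM.1 (hLM x hx) hyM.2 (Or.inl hxy)).1 hx)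
  · have hdL : d ∈ L := by tauto
    refine not_cut hG hMv (L := L) ?_ ⟨d, hdL⟩ ⟨u, by simp [h1, huM], huL⟩ ?_
    · intro x hx
      rw [hmv]
      exact ⟨fun hxv => hvL (hxv ▸ hx), hLM x hx⟩
    · intro x hx y hyM hyL hxy
      rw [hmv] at hyM
      have hxu : x ≠ u := fun h => huL (h ▸ hx)
      have hxv : x ≠ v := fun h => hvL (h ▸ hx)
      by_cases hyu : y = u
      · subst hyu
        exact hbL (hub x hxv (hLM x hx) hxy.symm ▸ hx)
      · exact hyL ((hlink x y hxu hxv hyu hyM.1 (hLM x hx) hyM.2 (Or.inl hxy)).1 hx)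

/-- If `G` has only the six vertices and `d` is not adjacent to `a`, then `{v, b, c}` is a forest
cutting off `d`. -/
lemma not_small (hG : MinCounterexample ForestClass α β G)
    (h : Config G u v a b c d) (hcd : c ≠ d)
    (hall : ∀ x, x = u ∨ x = v ∨ x = a ∨ x = b ∨ x = c ∨ x = d) (had : ¬ G.Adj a d) : False := by
  obtain ⟨hcv, hca, hcb⟩ := h.c_ne
  obtain ⟨hdu, hda, hdb⟩ := h.d_ne
  obtain ⟨h1, h2, h3, h4, h5, h6, h7, h8⟩ := h.ne
  refine not_cut hG (M := insert v {b, c}) (L := {d}) (acyclic_insert (acyclic_pair G b c) ?_) ?_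
    ⟨d, rfl⟩ ⟨u, by simp [h1, h3, h4], by simp [hdu.symm]⟩ ?_
  · have : ∀ x ∈ ({b, c} : Set V), G.Adj v x → x = b := by
      rintro x (rfl | rfl) hvx
      · rfl
      · rcases (h.nbr_v x).1 hvx with rfl | rfl | rfl | rfl <;> contradiction
    intro x hx y hy hvx hvy
    rw [this x hx hvx, this y hy hvy]
  · rintro x rfl
    simp [h7.symm, hdb, hcd.symm]
  · rintro x rfl y hyM hyL hxy
    simp only [Set.mem_insert_iff, Set.mem_singleton_iff, not_or] at hyM hyL
    rcases hall y with rfl | rfl | rfl | rfl | rfl | rfl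
    · rcases (h.nbr_u x).1 hxy.symm with rfl | rfl | rfl | rfl <;> contradiction
    all_goals first | exact had hxy.symm | tauto

/-- If `c` has at most one neighbour in `{a, b}`, and `d` at most one in `{a, b, c}`, then
`{a, b, c, d}` induces a forest. -/
lemma acyclic_nbrs (h : Config G u v a b c d) (hc : ¬ (G.Adj a c ∧ G.Adj b c))
    (hac : G.Adj a d → ¬ G.Adj b d ∧ ¬ G.Adj c d) (hbd : G.Adj b d → ¬ G.Adj c d) :
    (G.induce {d, c, a, b}).IsAcyclic := by
  refine acyclic_insert (acyclic_insert (acyclic_pair G a b) ?_) ?_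
  · rintro x (rfl | rfl) y (rfl | rfl) hx hy <;>
      first | rfl | (have := hx.symm; have := hy.symm; tauto)
  · rintro x (rfl | rfl | rfl) y (rfl | rfl | rfl) hx hy <;>
      first | rfl | (have := hx.symm; have := hy.symm; tauto)

lemma false [Finite V] (hα2 : α ≤ 5 / 2) (hβ : 4 * α - β = 6)
    (hG : MinCounterexample ForestClass α β G) (h : Config G u v a b c d) : False := by
  by_cases hcd : c = d
  · subst hcd
    exact h.false_of_eq hα2 hβ hG
  have hcard := h.six_le hcd
  have hc : ¬ (G.Adj a c ∧ G.Adj b c) := fun hh => h.not_triangle hα2 hG hcd hh.1 hh.2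
  have hd : ¬ (G.Adj a d ∧ G.Adj b d) := fun hh =>
    h.symm.not_triangle hα2 hG (Ne.symm hcd) hh.1 hh.2
  by_cases hall : ∀ x, x = u ∨ x = v ∨ x = a ∨ x = b ∨ x = c ∨ x = d
  · by_cases had : G.Adj a d
    · refine h.swap.not_small hG hcd (fun x => ?_) fun hbd => hd ⟨had, hbd⟩
      have := hall x
      tauto
    · exact h.not_small hG hcd hall had
  push Not at hall
  obtain ⟨z, hzu, hzv, hza, hzb, hzc, hzd⟩ := hall
  have hX : (G.induce {d, c, a, b}).IsAcyclic := by
    -- The order in which `c` and `d` are attached to `a b` matters: if `c d` is an edge and `d` is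
    -- adjacent to `a` or `b`, then `c` must come last.
    by_cases hone : (G.Adj a d → ¬ G.Adj c d) ∧ (G.Adj b d → ¬ G.Adj c d)
    · exact h.acyclic_nbrs hc (by tauto) hone.2
    · have hcd' : G.Adj c d := by tauto
      have hnac : ¬ G.Adj a c := fun hac => by
        by_cases had : G.Adj a d
        · exact h.not_covered hα2 hG hcard s(b, c) s(b, d) (by simp [hac]) (by simp)
            (by simp [had]) (by simp) (by simp [hcd'])
        · exact h.not_covered hα2 hG hcard s(b, c) s(a, d) (by simp [hac]) (by simp)
            (by simp) (Or.inl (by tauto)) (by simp [hcd'])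
      have hnbc : ¬ G.Adj b c := fun hbc => by
        by_cases had : G.Adj a d
        · exact h.not_covered hα2 hG hcard s(a, c) s(b, d) (by simp) (by simp [hbc])
            (by simp [had]) (by simp) (by simp [hcd'])
        · exact h.not_covered hα2 hG hcard s(a, c) s(a, d) (by simp) (by simp [hbc])
            (by simp) (Or.inl (by tauto)) (by simp [hcd'])
      rw [Set.insert_comm]
      exact h.symm.acyclic_nbrs hd (fun hh => absurd hh hnac) (fun hh => absurd hh hnbc)
  obtain ⟨hcv, hca, hcb⟩ := h.c_ne
  obtain ⟨hdu, hda, hdb⟩ := h.d_ne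
  obtain ⟨h1, h2, h3, h4, h5, h6, h7, h8⟩ := h.ne
  refine not_cut hG (L := {u, v}) hX ?_ ⟨u, by simp⟩
    ⟨z, by simp [hza, hzb, hzc, hzd], by simp [hzu, hzv]⟩ ?_
  · rintro x (rfl | rfl)
    · simp [hdu.symm, h2, h3, h4]
    · simp [h5, h6, h7, hcv.symm]
  · intro x hx y hyM hyL hxy
    simp only [Set.mem_insert_iff, Set.mem_singleton_iff, not_or] at hyM hyL
    rcases hx with rfl | rfl
    · have := (h.nbr_u y).1 hxy
      tauto
    · have := (h.nbr_v y).1 hxy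
      tauto

end Config

/-- In a clique `{u, v, a, b}`, a vertex `u` of degree 4 has exactly one further neighbour. -/
lemma exists_nbr {V : Type*} [Finite V] {G : SimpleGraph V} {u v a b : V}
    (hv : G.Adj u v) (ha : G.Adj u a) (hb : G.Adj u b) (hva : v ≠ a) (hvb : v ≠ b) (hab : a ≠ b)
    (hu : vdeg G u = 4) :
    ∃ c, (c ≠ v ∧ c ≠ a ∧ c ≠ b) ∧ ∀ x, G.Adj u x ↔ x = v ∨ x = a ∨ x = b ∨ x = c := by
  have h3 : ({v, a, b} : Set V).ncard = 3 := by
    rw [Set.ncard_insert_of_notMem (by simp [hva, hvb]), Set.ncard_pair hab]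
  have hsub : ({v, a, b} : Set V) ⊆ G.neighborSet u := by
    rintro x (rfl | rfl | rfl) <;> assumption
  have hd := Set.ncard_sdiff_add_ncard_of_subset hsub
  unfold vdeg at hu
  have h1 : (G.neighborSet u \ {v, a, b}).ncard = 1 := by omega
  obtain ⟨c, hc⟩ := Set.ncard_eq_one.1 h1
  have hmem : ∀ x, (G.Adj u x ∧ ¬ (x = v ∨ x = a ∨ x = b)) ↔ x = c := fun x => by
    simpa using Set.ext_iff.1 hc x
  have hcc := (hmem c).2 rfl
  refine ⟨c, by tauto, fun x => ⟨fun hx => ?_, ?_⟩⟩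
  · have := hmem x
    tauto
  · rintro (rfl | rfl | rfl | rfl)
    exacts [hv, ha, hb, hcc.1]

/-- for `2 < α ≤ 5/2`, `4α − β = 6`, in a minimal counterexample for
forests, no two degree-4 vertices lie in a common `K4` subgraph. -/
theorem stmt14 (α β : ℝ) (hα1 : 2 < α) (hα2 : α ≤ 5 / 2) (hβ : 4 * α - β = 6)
    {V : Type} [Fintype V] (G : SimpleGraph V)
    (hG : MinCounterexample ForestClass α β G) :
    ¬ ∃ (S : Set V) (u v : V), u ∈ S ∧ v ∈ S ∧ u ≠ v ∧
      S.ncard = 4 ∧ G.induce S = ⊤ ∧ vdeg G u = 4 ∧ vdeg G v = 4 := by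
  rintro ⟨S, u, v, huS, hvS, huv, hcard, htop, hdu, hdv⟩
  have hadj : ∀ x ∈ S, ∀ y ∈ S, x ≠ y → G.Adj x y := by
    intro x hx y hy hxy
    have h1 : (G.induce S).Adj ⟨x, hx⟩ ⟨y, hy⟩ := by
      rw [htop]
      exact fun h => hxy (congrArg Subtype.val h)
    exact h1
  have hsub : ({u, v} : Set V) ⊆ S := by
    rintro x (rfl | rfl) <;> assumption
  have hd := Set.ncard_sdiff_add_ncard_of_subset hsub
  rw [Set.ncard_pair huv, hcard] at hd
  obtain ⟨a, b, hab, hSab⟩ := Set.ncard_eq_two.1 (by omega : (S \ {u, v}).ncard = 2)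
  have ha : a ∈ S \ {u, v} := by simp [hSab]
  have hb : b ∈ S \ {u, v} := by simp [hSab]
  simp only [Set.mem_sdiff, Set.mem_insert_iff, Set.mem_singleton_iff, not_or] at ha hb
  obtain ⟨haS, hau, hav⟩ := ha
  obtain ⟨hbS, hbu, hbv⟩ := hb
  obtain ⟨c, hc, hcu⟩ := exists_nbr (hadj u huS v hvS huv) (hadj u huS a haS (Ne.symm hau))
    (hadj u huS b hbS (Ne.symm hbu)) (Ne.symm hav) (Ne.symm hbv) hab hdu
  obtain ⟨d, hd, hdv'⟩ := exists_nbr (hadj v hvS u huS huv.symm) (hadj v hvS a haS (Ne.symm hav))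
    (hadj v hvS b hbS (Ne.symm hbv)) (Ne.symm hau) (Ne.symm hbu) hab hdv
  exact Config.false hα2 hβ hG ⟨hcu, hdv', hadj a haS b hbS hab, hc, hd, hdu, hdv⟩
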